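/- arXiv:math/9307216 — 3 statements merged into one kernel-verified Lean document; each statement's English description precedes it below -/
import Mathlib

section
/- Let n be a natural number and let c > 0 be a real number. Let (α_k) and (β_k) be sequences of real numbers with α_k > -1 and β_k > -1 for all k, such that α_k → ∞, β_k → ∞ and α_k/β_k → c as k → ∞. Then for every real x, the monic Jacobi polynomials satisfy lim_{k→∞} p_n^{(α_k,β_k)}(x) = (x + (c-1)/(c+1))^n. -/
/-!
The sum defining `p_n^{(α,β)}` has a fixed number of terms, so the limit may be taken term by term.
The quotient of Pochhammer symbols in the `s`-th term is a product of `n - s` factors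
`(α + a) / (α + β + b)` with `a`, `b` independent of `k`, each tending to `c / (c + 1)`
(`tendsto_shifted_ratio`, `tendsto_ascPochhammer_ratio`). The limit is therefore
`∑ C(n,s) (2c/(c+1))^(n-s) (x-1)^s`, which the binomial theorem sums to
`(x - 1 + 2c/(c+1))^n = (x + (c-1)/(c+1))^n`.
-/

open Filter Polynomial

/-- The monic Jacobi polynomial `p_n^{(α,β)}`, given explicitly by
`p_n^{(α,β)}(x) = Σ_{s=0}^{n} C(n,s) · 2^{n-s} · ((α+s+1)_{n-s}/(α+β+n+s+1)_{n-s}) · (x-1)^s`. -/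
noncomputable def jacobiMonic (α β : ℝ) (n : ℕ) : Polynomial ℝ :=
  ∑ s ∈ Finset.range (n + 1),
    Polynomial.C ((n.choose s : ℝ) * 2 ^ (n - s) *
      ((ascPochhammer ℝ (n - s)).eval (α + s + 1) /
       (ascPochhammer ℝ (n - s)).eval (α + β + n + s + 1))) *
    (Polynomial.X - 1) ^ s

/-- Every factor of the Pochhammer quotient has the limit `c / (c + 1)`, the bounded shifts `a`
and `b` being negligible against `β → ∞`. -/
lemma tendsto_shifted_ratio {c : ℝ} (hc : 0 < c) {α β : ℕ → ℝ}
    (hβ : Tendsto β atTop atTop)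
    (hr : Tendsto (fun k => α k / β k) atTop (nhds c)) (a b : ℝ) :
    Tendsto (fun k => (α k + a) / (α k + β k + b)) atTop (nhds (c / (c + 1))) := by
  have h0 : ∀ r : ℝ, Tendsto (fun k => r / β k) atTop (nhds 0) := fun r =>
    hβ.const_div_atTop r
  have h := (hr.add (h0 a)).div ((hr.add_const 1).add (h0 b)) (by positivity)
  simp only [add_zero] at h
  refine h.congr' ?_
  filter_upwards [hβ.eventually_gt_atTop 0] with k hk
  have hk' : β k ≠ 0 := hk.ne'
  -- numerator and denominator are both divided by `β k`
  have h1 : α k / β k + a / β k = (α k + a) / β k := by ring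
  have h2 : α k / β k + 1 + b / β k = (α k + β k + b) / β k := by field_simp
  simp only [Pi.div_apply]
  rw [h1, h2, div_div_div_cancel_right₀ hk']

lemma tendsto_ascPochhammer_ratio {c : ℝ} (hc : 0 < c) {α β : ℕ → ℝ}
    (hβ : Tendsto β atTop atTop)
    (hr : Tendsto (fun k => α k / β k) atTop (nhds c)) (a b : ℝ) (m : ℕ) :
    Tendsto (fun k => (ascPochhammer ℝ m).eval (α k + a) /
      (ascPochhammer ℝ m).eval (α k + β k + b)) atTop (nhds ((c / (c + 1)) ^ m)) := by
  induction m with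
  | zero => simp
  | succ m ih =>
    simp only [ascPochhammer_succ_eval, pow_succ, mul_div_mul_comm]
    refine ih.mul ?_
    simpa only [add_assoc] using tendsto_shifted_ratio hc hβ hr (a + m) (b + m)

/-- Let `n` be a natural number and `c > 0`. If `α_k, β_k > -1`, `α_k → ∞`, `β_k → ∞`
and `α_k / β_k → c`, then for every real `x`,
`p_n^{(α_k,β_k)}(x) → (x + (c-1)/(c+1))^n`. -/
theorem jacobiMonic_tendsto_of_ratio_tendsto (n : ℕ) (c : ℝ) (hc : 0 < c)
    (α β : ℕ → ℝ) (hα1 : ∀ k, -1 < α k) (hβ1 : ∀ k, -1 < β k)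
    (hα : Tendsto α atTop atTop) (hβ : Tendsto β atTop atTop)
    (hr : Tendsto (fun k => α k / β k) atTop (nhds c)) (x : ℝ) :
    Tendsto (fun k => (jacobiMonic (α k) (β k) n).eval x) atTop
      (nhds ((x + (c - 1) / (c + 1)) ^ n)) := by
  have hx : x + (c - 1) / (c + 1) = (x - 1) + 2 * (c / (c + 1)) := by
    have : c + 1 ≠ 0 := by positivity
    field_simp
    ring
  rw [hx, add_pow]
  simp only [jacobiMonic, eval_finsetSum]
  refine tendsto_finsetSum _ fun s _ => ?_
  have h := ((tendsto_ascPochhammer_ratio hc hβ hr (s + 1) (n + s + 1) (n - s)).const_mul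
    ((n.choose s : ℝ) * 2 ^ (n - s))).mul_const ((x - 1) ^ s)
  convert h using 2
  · simp [add_assoc]
  · rw [mul_pow]
    ring
end

section
/- Let n be a natural number. Then for every real x, lim_{α→∞} α^{n/2} · p_n^{(α,α)}(α^{-1/2} x) = h_n(x), where p_n^{(α,α)} is the monic Jacobi polynomial with equal parameters and h_n is the monic Hermite polynomial. -/
/-!
Both families satisfy a three-term recurrence, and the coefficients converge after rescaling.
For equal parameters the monic Jacobi polynomials satisfy
`p_{n+2}(x) = x p_{n+1}(x) - c p_n(x)` with
`c = (n+1)(n+1+2α) / ((2n+2α+3)(2n+2α+1))` (`jacobiMonic_eval_add_two`), while the monic Hermite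
polynomials satisfy `h_{n+2}(x) = x h_{n+1}(x) - (n+1)/2 · h_n(x)` (`hermiteMonic_eval_add_two`).
The scaled functions `α^{n/2} p_n(α^{-1/2} x)` therefore satisfy the Jacobi recurrence with `c`
replaced by `α c`, which tends to `(n+1)/2`, and the limit follows by two-step induction on `n`.

The Jacobi recurrence is verified coefficientwise in powers of `x - 1`: all Pochhammer symbols
involved are rational multiples of two of them, which reduces it to a rational identity.
-/

open Filter Polynomial

/-- The monic Hermite polynomial `h_n`, defined by `h_n(x) = 2^{-n/2} · He_n(x·√2)`,
where `He_n` is the probabilists' Hermite polynomial (`Polynomial.hermite`). -/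
noncomputable def hermiteMonic (n : ℕ) : Polynomial ℝ :=
  Polynomial.C ((2 : ℝ) ^ (-(n : ℝ) / 2)) *
    ((Polynomial.hermite n).map (Int.castRingHom ℝ)).comp
      (Polynomial.C (Real.sqrt 2) * Polynomial.X)

/-- The coefficient of `(x - 1)^s` in the monic Jacobi polynomial `p_n^{(α,α)}`. It vanishes for
`s > n` because of the binomial factor. -/
noncomputable def jacobiCoeff (α : ℝ) (n s : ℕ) : ℝ :=
  (n.choose s : ℝ) * 2 ^ (n - s) *
    ((ascPochhammer ℝ (n - s)).eval (α + s + 1) /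
      (ascPochhammer ℝ (n - s)).eval (α + α + n + s + 1))

/-- The polynomial `p_n^{(α,α)}(1 + X)`. -/
noncomputable def jacobiShifted (α : ℝ) (n : ℕ) : Polynomial ℝ :=
  ∑ s ∈ Finset.range (n + 1), C (jacobiCoeff α n s) * X ^ s

lemma jacobiMonic_eval (α : ℝ) (n : ℕ) (x : ℝ) :
    (jacobiMonic α α n).eval x = (jacobiShifted α n).eval (x - 1) := by
  simp [jacobiMonic, jacobiShifted, jacobiCoeff, eval_finsetSum]

lemma coeff_jacobiShifted (α : ℝ) (n s : ℕ) :
    (jacobiShifted α n).coeff s = jacobiCoeff α n s := by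
  simp only [jacobiShifted, finsetSum_coeff, coeff_C_mul_X_pow]
  rw [Finset.sum_ite_eq]
  split_ifs with h
  · rfl
  · have h' : n < s := by simpa using h
    simp [jacobiCoeff, Nat.choose_eq_zero_of_lt h']

lemma ascPochhammer_eval_succ_left (m : ℕ) (u : ℝ) :
    (ascPochhammer ℝ (m + 1)).eval u = u * (ascPochhammer ℝ m).eval (u + 1) := by
  simp [ascPochhammer_succ_left, eval_comp]

lemma choose_add_succ (s k : ℕ) :
    ((s + k + 1).choose s : ℝ) = (s + k).choose s * (s + k + 1) / (k + 1) := by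
  have h := Nat.choose_mul_succ_eq (s + k) s
  have h2 : s + k + 1 - s = k + 1 := by omega
  rw [h2] at h
  rw [eq_div_iff (by positivity)]
  exact_mod_cast h.symm

lemma jacobiCoeff_add (α : ℝ) (s k : ℕ) :
    jacobiCoeff α (s + k) s = ((s + k).choose s : ℝ) * 2 ^ k *
      ((ascPochhammer ℝ k).eval (α + s + 1) /
        (ascPochhammer ℝ k).eval (2 * α + 2 * s + k + 1)) := by
  simp only [jacobiCoeff, Nat.add_sub_cancel_left]
  push_cast
  ring_nf

/-- Raising the degree by one, as a multiple of the lower coefficient. -/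
lemma jacobiCoeff_add_one {α : ℝ} (hα : 0 < α) (s k : ℕ) :
    jacobiCoeff α (s + k + 1) s = jacobiCoeff α (s + k) s *
      ((s + k + 1) * (2 * α + 2 * s + k + 1) /
        ((k + 1) * (2 * α + 2 * s + 2 * k + 1))) := by
  have hQ : 0 < (ascPochhammer ℝ k).eval (2 * α + 2 * s + k + 1) :=
    ascPochhammer_pos _ _ (by positivity)
  have e := ascPochhammer_eval_succ_left (k + 1) (2 * α + 2 * s + k + 1)
  rw [ascPochhammer_succ_eval, ascPochhammer_succ_eval] at e
  have e' : (ascPochhammer ℝ (k + 1)).eval (2 * α + 2 * s + k + 1 + 1) =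
      (ascPochhammer ℝ k).eval (2 * α + 2 * s + k + 1) * (2 * α + 2 * s + k + 1 + k) *
        (2 * α + 2 * s + k + 1 + (k + 1 : ℕ)) / (2 * α + 2 * s + k + 1) := by
    rw [eq_div_iff (by positivity), e]; ring
  have := jacobiCoeff_add α s (k + 1)
  rw [← add_assoc] at this
  rw [this, jacobiCoeff_add, choose_add_succ, ascPochhammer_succ_eval]
  have e2 : 2 * α + 2 * (s : ℝ) + ((k + 1 : ℕ) : ℝ) + 1 = 2 * α + 2 * s + k + 1 + 1 := by
    push_cast; ring
  rw [e2, e']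
  generalize (ascPochhammer ℝ k).eval (2 * α + 2 * s + k + 1) = Q at hQ
  generalize (ascPochhammer ℝ k).eval (α + s + 1) = P
  have h1 : (2 * α + 2 * s + k + 1 + ((k + 1 : ℕ) : ℝ)) = 2 * (α + s + 1 + k) := by
    push_cast; ring
  rw [h1]
  have : 0 < α + s + 1 + k := by positivity
  field_simp
  ring

lemma choose_lower (s k : ℕ) :
    ((s + 1 + k + 1).choose s : ℝ) =
      (s + 1 + k).choose (s + 1) * ((s + 1) * (s + 1 + k + 1)) / ((k + 1) * (k + 2)) := by
  have h := choose_add_succ s (k + 1)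
  have h2 := Nat.choose_succ_right_eq (s + (k + 1)) s
  rw [Nat.add_sub_cancel_left] at h2
  have h3 : ((s + (k + 1)).choose s : ℝ) =
      (s + (k + 1)).choose (s + 1) * (s + 1) / (k + 1) := by
    rw [eq_div_iff (by positivity)]
    exact_mod_cast h2.symm
  rw [show s + 1 + k = s + (k + 1) by ring, h, h3]
  push_cast
  field_simp
  ring

/-- Lowering the exponent while raising the degree, as a multiple of the original coefficient. -/
lemma jacobiCoeff_lower {α : ℝ} (hα : 0 < α) (s k : ℕ) :
    jacobiCoeff α (s + 1 + k + 1) s = jacobiCoeff α (s + 1 + k) (s + 1) *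
      (2 * (s + 1) * (s + 1 + k + 1) * (α + s + 1) /
        ((k + 1) * (k + 2) * (2 * α + 2 * s + 2 * k + 3))) := by
  have hQ : 0 < (ascPochhammer ℝ k).eval (2 * α + 2 * s + k + 3) :=
    ascPochhammer_pos _ _ (by positivity)
  have h := jacobiCoeff_add α s (k + 2)
  have h' := jacobiCoeff_add α (s + 1) k
  rw [show s + (k + 2) = s + 1 + k + 1 by ring, choose_lower,
    ascPochhammer_eval_succ_left (k + 1) (α + s + 1), ascPochhammer_succ_eval,
    ascPochhammer_succ_eval (k + 1), ascPochhammer_succ_eval k,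
    show 2 * α + 2 * (s : ℝ) + ((k + 2 : ℕ) : ℝ) + 1 = 2 * α + 2 * s + k + 3 by
      push_cast; ring] at h
  rw [show 2 * α + 2 * ((s + 1 : ℕ) : ℝ) + k + 1 = 2 * α + 2 * s + k + 3 by push_cast; ring,
    show α + ((s + 1 : ℕ) : ℝ) + 1 = α + s + 1 + 1 by push_cast; ring] at h'
  rw [h, h']
  generalize (ascPochhammer ℝ k).eval (2 * α + 2 * s + k + 3) = Q at hQ
  generalize (ascPochhammer ℝ k).eval (α + s + 1 + 1) = P
  have h1 : 2 * α + 2 * (s : ℝ) + k + 3 + ((k + 1 : ℕ) : ℝ) = 2 * (α + s + 1 + 1 + k) := by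
    push_cast; ring
  have h2 : 2 * α + 2 * (s : ℝ) + k + 3 + k = 2 * α + 2 * s + 2 * k + 3 := by ring
  rw [h1, h2]
  have : 0 < α + s + 1 + 1 + k := by positivity
  field_simp
  ring

lemma jacobiCoeff_self (α : ℝ) (n : ℕ) : jacobiCoeff α n n = 1 := by
  simp [jacobiCoeff]

lemma jacobiCoeff_of_lt (α : ℝ) {n s : ℕ} (h : n < s) : jacobiCoeff α n s = 0 := by
  simp [jacobiCoeff, Nat.choose_eq_zero_of_lt h]

/-- The coefficient of `(x - 1)^n` in `p_{n+1}`. -/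
lemma jacobiCoeff_succ_self {α : ℝ} (hα : 0 < α) (n : ℕ) :
    jacobiCoeff α (n + 1) n = n + 1 := by
  have h := jacobiCoeff_add_one hα n 0
  simp only [Nat.add_zero, jacobiCoeff_self] at h
  rw [h]
  push_cast
  field_simp
  ring

/-- The constant term, in powers of `x - 1`, of the Jacobi recurrence. -/
lemma jacobiCoeff_recurrence_zero {α : ℝ} (hα : 0 < α) (n : ℕ) :
    jacobiCoeff α (n + 2) 0 = jacobiCoeff α (n + 1) 0 -
      (n + 1) * (n + 1 + 2 * α) / ((2 * n + 2 * α + 3) * (2 * n + 2 * α + 1)) *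
        jacobiCoeff α n 0 := by
  have h0 := jacobiCoeff_add_one hα 0 n
  have h1 := jacobiCoeff_add_one hα 0 (n + 1)
  rw [zero_add] at h0 h1
  rw [h1, h0]
  generalize jacobiCoeff α n 0 = a
  push_cast
  field_simp
  ring

/-- The higher terms, in powers of `x - 1`, of the Jacobi recurrence. -/
lemma jacobiCoeff_recurrence_succ {α : ℝ} (hα : 0 < α) (n s : ℕ) :
    jacobiCoeff α (n + 2) (s + 1) = jacobiCoeff α (n + 1) s + jacobiCoeff α (n + 1) (s + 1) -
      (n + 1) * (n + 1 + 2 * α) / ((2 * n + 2 * α + 3) * (2 * n + 2 * α + 1)) *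
        jacobiCoeff α n (s + 1) := by
  rcases lt_trichotomy s n with h | rfl | h
  · obtain ⟨k, rfl⟩ : ∃ k, n = s + 1 + k := Nat.exists_eq_add_of_le h
    have h0 := jacobiCoeff_add_one hα (s + 1) k
    have h1 := jacobiCoeff_add_one hα (s + 1) (k + 1)
    rw [show s + 1 + (k + 1) + 1 = s + 1 + k + 2 by ring,
      show s + 1 + (k + 1) = s + 1 + k + 1 by ring] at h1
    rw [h1, h0, jacobiCoeff_lower hα]
    generalize jacobiCoeff α (s + 1 + k) (s + 1) = a
    push_cast
    field_simp
    ring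
  · rw [jacobiCoeff_succ_self hα (s + 1), jacobiCoeff_succ_self hα s, jacobiCoeff_self,
      jacobiCoeff_of_lt α (Nat.lt_succ_self s)]
    push_cast
    ring
  · rw [jacobiCoeff_of_lt α (show n < s + 1 by omega),
      jacobiCoeff_of_lt α (show n + 1 < s + 1 by omega)]
    rcases eq_or_lt_of_le (Nat.succ_le_of_lt h) with rfl | h'
    · simp [jacobiCoeff_self]
    · rw [jacobiCoeff_of_lt α (show n + 2 < s + 1 by omega), jacobiCoeff_of_lt α h']
      ring

lemma jacobiMonic_eval_add_two {α : ℝ} (hα : 0 < α) (n : ℕ) (x : ℝ) :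
    (jacobiMonic α α (n + 2)).eval x = x * (jacobiMonic α α (n + 1)).eval x -
      (n + 1) * (n + 1 + 2 * α) / ((2 * n + 2 * α + 3) * (2 * n + 2 * α + 1)) *
        (jacobiMonic α α n).eval x := by
  have h : jacobiShifted α (n + 2) = X * jacobiShifted α (n + 1) + jacobiShifted α (n + 1) -
      C ((n + 1) * (n + 1 + 2 * α) / ((2 * n + 2 * α + 3) * (2 * n + 2 * α + 1))) *
        jacobiShifted α n := by
    ext s
    rcases s with _ | s
    · rw [coeff_sub, coeff_add, coeff_C_mul, mul_coeff_zero, coeff_X_zero, zero_mul, zero_add]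
      simp only [coeff_jacobiShifted]
      exact jacobiCoeff_recurrence_zero hα n
    · rw [coeff_sub, coeff_add, coeff_C_mul, coeff_X_mul]
      simp only [coeff_jacobiShifted]
      exact jacobiCoeff_recurrence_succ hα n s
  simp only [jacobiMonic_eval, h, eval_sub, eval_add, eval_mul, eval_X, eval_C]
  ring

lemma derivative_hermite_succ (n : ℕ) :
    derivative (hermite (n + 1)) = C ((n : ℤ) + 1) * hermite n := by
  induction n with
  | zero => simp
  | succ n ih =>
    rw [hermite_succ (n + 1), derivative_sub, derivative_mul, ih, derivative_C_mul,
      hermite_succ n]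
    simp
    ring

lemma hermiteMonic_eval_add_two (n : ℕ) (x : ℝ) :
    (hermiteMonic (n + 2)).eval x = x * (hermiteMonic (n + 1)).eval x -
      (n + 1) / 2 * (hermiteMonic n).eval x := by
  have h1 : (2 : ℝ) ^ (-((n + 2 : ℕ) : ℝ) / 2) = 2 ^ (-(n : ℝ) / 2) / 2 := by
    rw [show -((n + 2 : ℕ) : ℝ) / 2 = -(n : ℝ) / 2 - 1 by push_cast; ring,
      Real.rpow_sub_one (by norm_num)]
  have h2 : (2 : ℝ) ^ (-((n + 1 : ℕ) : ℝ) / 2) = 2 ^ (-(n : ℝ) / 2) * √2 / 2 := by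
    rw [show -((n + 1 : ℕ) : ℝ) / 2 = -(n : ℝ) / 2 + 1 / 2 - 1 by push_cast; ring,
      Real.rpow_sub_one (by norm_num), Real.rpow_add (by norm_num), ← Real.sqrt_eq_rpow]
  have h3 : hermite (n + 2) = X * hermite (n + 1) - C ((n : ℤ) + 1) * hermite n := by
    rw [hermite_succ (n + 1), derivative_hermite_succ]
  simp only [hermiteMonic, h1, h2, h3]
  simp [eval_comp]
  ring

lemma tendsto_mul_recurrence_coeff (n : ℕ) :
    Tendsto (fun α : ℝ => α * ((n + 1) * (n + 1 + 2 * α) /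
      ((2 * n + 2 * α + 3) * (2 * n + 2 * α + 1)))) atTop (nhds (((n : ℝ) + 1) / 2)) := by
  have hinv : Tendsto (fun α : ℝ => α⁻¹) atTop (nhds 0) := tendsto_inv_atTop_zero
  have h : Tendsto (fun α : ℝ => ((n : ℝ) + 1) * ((n + 1) * α⁻¹ + 2) /
      (((2 * n + 3) * α⁻¹ + 2) * ((2 * n + 1) * α⁻¹ + 2))) atTop
      (nhds (((n : ℝ) + 1) * ((n + 1) * 0 + 2) /
      (((2 * n + 3) * 0 + 2) * ((2 * n + 1) * 0 + 2)))) := by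
    refine Tendsto.div ?_ ?_ (by norm_num)
    · exact ((hinv.const_mul _).add_const _).const_mul _
    · exact ((hinv.const_mul _).add_const _).mul ((hinv.const_mul _).add_const _)
  have e : ((n : ℝ) + 1) * ((n + 1) * 0 + 2) /
      (((2 * n + 3) * 0 + 2) * ((2 * n + 1) * 0 + 2)) = ((n : ℝ) + 1) / 2 := by
    ring
  rw [e] at h
  refine h.congr' ?_
  filter_upwards [eventually_gt_atTop 0] with α hα
  field_simp
  ring

/-- For every real `x`, `lim_{α→∞} α^{n/2} · p_n^{(α,α)}(α^{-1/2} x) = h_n(x)`. -/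
theorem jacobiMonic_scaled_tendsto_hermiteMonic (n : ℕ) (x : ℝ) :
    Tendsto
      (fun α : ℝ =>
        α ^ ((n : ℝ) / 2) * (jacobiMonic α α n).eval (α ^ (-(1 : ℝ) / 2) * x))
      atTop (nhds ((hermiteMonic n).eval x)) := by
  induction n using Nat.twoStepInduction with
  | zero => simp [jacobiMonic, hermiteMonic]
  | one =>
    have hh : (hermiteMonic 1).eval x = x := by
      have h : (2 : ℝ) ^ (-(1 : ℝ) / 2) * √2 = 1 := by
        rw [Real.sqrt_eq_rpow, ← Real.rpow_add (by norm_num)]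
        norm_num
      simp [hermiteMonic, ← mul_assoc, h]
    rw [hh]
    refine tendsto_const_nhds.congr' ?_
    filter_upwards [eventually_gt_atTop 0] with α hα
    have h : α ^ ((1 : ℝ) / 2) * α ^ (-(1 : ℝ) / 2) = 1 := by
      rw [← Real.rpow_add hα]
      norm_num
    have h2 : (2 : ℝ) * ((α + 1) / (α + α + 1 + 1)) = 1 := by
      field_simp
      ring
    simp [jacobiMonic, Finset.sum_range_succ, h2, ← mul_assoc]
    rw [← one_div, h, one_mul]
  | more n ih0 ih1 =>
    rw [hermiteMonic_eval_add_two]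
    refine ((ih1.const_mul x).sub ((tendsto_mul_recurrence_coeff n).mul ih0)).congr' ?_
    filter_upwards [eventually_gt_atTop 0] with α hα
    rw [jacobiMonic_eval_add_two hα]
    have h2 : α ^ (((n + 2 : ℕ) : ℝ) / 2) = α ^ ((n : ℝ) / 2) * α := by
      rw [show ((n + 2 : ℕ) : ℝ) / 2 = (n : ℝ) / 2 + 1 by push_cast; ring,
        Real.rpow_add_one hα.ne']
    have h1 : α ^ (((n + 1 : ℕ) : ℝ) / 2) =
        α ^ (((n + 2 : ℕ) : ℝ) / 2) * α ^ (-(1 : ℝ) / 2) := by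
      rw [← Real.rpow_add hα]
      congr 1
      push_cast
      ring
    rw [h1, h2]
    ring
end

section
/- Let m and n be natural numbers with m ≠ n. Then the monic Hermite polynomials h_n and h_m are orthogonal with respect to the weight e^{-x²} on ℝ: ∫_ℝ h_n(x) · h_m(x) · e^{-x²} dx = 0. Moreover, h_n is a monic polynomial of degree n. -/
/-!
The monic Hermite polynomials satisfy `h_{n+1} = X h_n - h_n' / 2`, inherited from the recurrence
of `Polynomial.hermite`. Since `(p e^{-x²})' = (p' - 2 x p) e^{-x²}` integrates to zero for each
polynomial `p`, the choice `p = q h_n` gives `∫ q h_{n+1} e^{-x²} = (1/2) ∫ q' h_n e^{-x²}`.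
Iterating, `h_n` is orthogonal to every `q` whose `n`-th derivative vanishes, in particular to
every `q` of degree less than `n`. As `h_m` has degree `m`, orthogonality follows by symmetry.
-/

open Polynomial

theorem hermiteMonic_succ (n : ℕ) :
    hermiteMonic (n + 1) = X * hermiteMonic n - C (1 / 2) * derivative (hermiteMonic n) := by
  have hs : Real.sqrt 2 * Real.sqrt 2 = 2 := Real.mul_self_sqrt (by norm_num)
  have hc : (2 : ℝ) ^ (-(n : ℝ) / 2) = (2 : ℝ) ^ (-((n + 1 : ℕ) : ℝ) / 2) * Real.sqrt 2 := by
    rw [Real.sqrt_eq_rpow, ← Real.rpow_add (by norm_num)]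
    congr 1
    push_cast
    ring
  unfold hermiteMonic
  rw [hc]
  apply Polynomial.funext
  intro x
  simp only [hermite_succ, Polynomial.map_sub, Polynomial.map_mul, map_X, derivative_map,
    derivative_mul, derivative_C, derivative_comp, derivative_X, eval_mul, eval_sub, eval_add,
    eval_C, eval_X, eval_comp, sub_comp, mul_comp, X_comp, eval_zero, eval_one]
  linear_combination
    (2 : ℝ) ^ (-((n + 1 : ℕ) : ℝ) / 2) * (1 / 2) *
      eval (Real.sqrt 2 * x) ((derivative (hermite n)).map (Int.castRingHom ℝ)) * hs

theorem natDegree_hermiteMonic (n : ℕ) : (hermiteMonic n).natDegree = n := by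
  have h2 : Real.sqrt 2 ≠ 0 := by positivity
  have hc : (2 : ℝ) ^ (-(n : ℝ) / 2) ≠ 0 := by positivity
  rw [hermiteMonic, natDegree_C_mul hc, natDegree_comp, natDegree_C_mul_X _ h2,
    (hermite_monic n).natDegree_map, natDegree_hermite, mul_one]

theorem monic_hermiteMonic (n : ℕ) : (hermiteMonic n).Monic := by
  have h2 : Real.sqrt 2 ≠ 0 := by positivity
  rw [Monic, hermiteMonic, leadingCoeff_mul, leadingCoeff_C,
    leadingCoeff_comp (by rw [natDegree_C_mul_X _ h2]; exact one_ne_zero),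
    ((hermite_monic n).map _).leadingCoeff, leadingCoeff_C_mul_X,
    (hermite_monic n).natDegree_map, natDegree_hermite, one_mul, Real.sqrt_eq_rpow,
    ← Real.rpow_natCast, ← Real.rpow_mul (by norm_num), ← Real.rpow_add (by norm_num)]
  ring_nf
  exact Real.rpow_zero 2

theorem integrable_eval_mul_gaussian (p : ℝ[X]) :
    MeasureTheory.Integrable fun x : ℝ => p.eval x * Real.exp (-x ^ 2) := by
  induction p using Polynomial.induction_on' with
  | add p q hp hq =>
    simp only [eval_add, add_mul]
    exact hp.add hq
  | monomial k a =>
    have hk : (-1 : ℝ) < k := by linarith [Nat.cast_nonneg (α := ℝ) k]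
    have h := (integrable_rpow_mul_exp_neg_mul_sq one_pos hk).const_mul a
    simpa only [eval_monomial, Real.rpow_natCast, neg_mul, one_mul, mul_assoc] using h

theorem integral_derivative_sub_mul_gaussian (p : ℝ[X]) :
    ∫ x : ℝ, (derivative p - C 2 * X * p).eval x * Real.exp (-x ^ 2) = 0 := by
  refine MeasureTheory.integral_eq_zero_of_hasDerivAt_of_integrable
    (f := fun x : ℝ => p.eval x * Real.exp (-x ^ 2)) (fun x => ?_)
    (integrable_eval_mul_gaussian _) (integrable_eval_mul_gaussian p)
  have h := (p.hasDerivAt x).mul ((hasDerivAt_pow 2 x).neg.exp)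
  refine h.congr_deriv ?_
  simp only [eval_sub, eval_mul, eval_C, eval_X, Pi.neg_apply]
  push_cast
  ring

/-- Integration by parts moves one derivative from the Hermite polynomial to `q`. -/
theorem integral_mul_hermiteMonic_succ (q : ℝ[X]) (n : ℕ) :
    ∫ x : ℝ, (q * hermiteMonic (n + 1)).eval x * Real.exp (-x ^ 2) =
      1 / 2 * ∫ x : ℝ, (derivative q * hermiteMonic n).eval x * Real.exp (-x ^ 2) := by
  have h := integral_derivative_sub_mul_gaussian (q * hermiteMonic n)
  have hfun : (fun x : ℝ => (derivative (q * hermiteMonic n) -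
        C 2 * X * (q * hermiteMonic n)).eval x * Real.exp (-x ^ 2)) =
      fun x : ℝ => (derivative q * hermiteMonic n).eval x * Real.exp (-x ^ 2) -
        2 * ((q * hermiteMonic (n + 1)).eval x * Real.exp (-x ^ 2)) := by
    funext x
    simp only [hermiteMonic_succ, derivative_mul, eval_sub, eval_add, eval_mul, eval_C, eval_X]
    ring
  rw [hfun, MeasureTheory.integral_sub (integrable_eval_mul_gaussian _)
    ((integrable_eval_mul_gaussian _).const_mul 2), MeasureTheory.integral_const_mul] at h
  linarith

/-- Vanishing of the `n`-th derivative encodes `deg q < n` in the form suited to induction. -/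
theorem integral_mul_hermiteMonic_eq_zero (n : ℕ) (q : ℝ[X]) (hq : derivative^[n] q = 0) :
    ∫ x : ℝ, (q * hermiteMonic n).eval x * Real.exp (-x ^ 2) = 0 := by
  induction n generalizing q with
  | zero =>
    have hq0 : q = 0 := hq
    simp [hq0]
  | succ n ih =>
    rw [integral_mul_hermiteMonic_succ, ih (derivative q) hq, mul_zero]

theorem integral_hermiteMonic_mul_of_lt {m n : ℕ} (h : m < n) :
    ∫ x : ℝ, (hermiteMonic m * hermiteMonic n).eval x * Real.exp (-x ^ 2) = 0 :=
  integral_mul_hermiteMonic_eq_zero n _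
    (iterate_derivative_eq_zero (by rwa [natDegree_hermiteMonic]))

/-- For `m ≠ n`, the monic Hermite polynomials `h_n` and `h_m` are orthogonal with
respect to the weight `e^{-x²}` on `ℝ`; moreover `h_n` is monic of degree `n`. -/
theorem hermiteMonic_orthogonal_monic (m n : ℕ) (hmn : m ≠ n) :
    (∫ x : ℝ, (hermiteMonic n).eval x * (hermiteMonic m).eval x * Real.exp (-x ^ 2)) = 0 ∧
    (hermiteMonic n).Monic ∧ (hermiteMonic n).natDegree = n := by
  refine ⟨?_, monic_hermiteMonic n, natDegree_hermiteMonic n⟩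
  simp_rw [← eval_mul]
  rcases lt_or_gt_of_ne hmn with h | h
  · rw [mul_comm]
    exact integral_hermiteMonic_mul_of_lt h
  · exact integral_hermiteMonic_mul_of_lt h
end
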